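/- Let m ≥ 1 and n ≥ 1 be integers, M_1,…,M_m > 0 real numbers, t_1,…,t_m positive integers with t_1 + ⋯ + t_m = n and t_i ≤ i for each i = 1,…,m, and 0 < λ_1 < λ_2 < ⋯ < λ_m real numbers. Then there exist real numbers m_j > 0, k_j > 0, b_j ≥ 0 (j = 1,…,n) and pairwise distinct indices i_1,…,i_m ∈ {1,…,n} such that m_{i_l} = M_l for every l = 1,…,m and ∏_{i=1}^{m}(λ − λ_i)^{t_i} divides det(K − λ(M+B)) in ℝ[λ]. -/

import Mathlib

open Polynomial

/-- The tridiagonal matrix of order `j` built from `k 1, …, k j` (1-indexed):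
diagonal entries `k r + k (r+1)` for `r < j`, last diagonal entry `k j`,
off-diagonal entries `-(k (r+1))`. -/
noncomputable def triMat (k : ℕ → ℝ) (j : ℕ) : Matrix (Fin j) (Fin j) ℝ :=
  Matrix.of fun r c =>
    if (r : ℕ) = (c : ℕ) then
      (if (r : ℕ) = j - 1 then k j else k ((r : ℕ) + 1) + k ((r : ℕ) + 2))
    else if (r : ℕ) + 1 = (c : ℕ) then -k ((c : ℕ) + 1)
    else if (c : ℕ) + 1 = (r : ℕ) then -k ((r : ℕ) + 1)
    else 0

/-- The matrix `K_j - λ (M_j + B_j)` with entries in `ℝ[λ]`. -/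
noncomputable def sysMat (m k b : ℕ → ℝ) (j : ℕ) :
    Matrix (Fin j) (Fin j) (Polynomial ℝ) :=
  (triMat k j).map Polynomial.C -
    (Polynomial.X : Polynomial ℝ) •
      ((Matrix.diagonal (fun i : Fin j => m ((i : ℕ) + 1)) + triMat b j).map Polynomial.C)

/-- `f_j(λ) = det (K_j - λ (M_j + B_j))`. -/
noncomputable def fpoly (m k b : ℕ → ℝ) (j : ℕ) : Polynomial ℝ :=
  (sysMat m k b j).det

/-- `g_j(λ)`: the leading principal minor of order `j-1` of `K_j - λ (M_j + B_j)`
(so `g 1 = 1`, the determinant of the empty matrix). -/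
noncomputable def gpoly (m k b : ℕ → ℝ) (j : ℕ) : Polynomial ℝ :=
  ((sysMat m k b j).submatrix (Fin.castLE (Nat.sub_le j 1))
    (Fin.castLE (Nat.sub_le j 1))).det

/-!
Adding a mass to the free end of a chain transforms the pair of the determinant `f_n` and its
leading principal minor `g_n` of order `n - 1` by a first-order recursion. Run backwards, this
removes masses from the free end, and a pair is realized, up to a constant factor, as soon as it can
be reduced to a pair `(s, 0)` with `s ≠ 0` through positive masses and links.

The roots are introduced in decreasing order. If `(P, Q)` reduces to `(s, 0)` and `x` lies below all
roots met so far, then `((x - λ) P, (x - λ) Q + e P)` is for small `e > 0` a perturbation of the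
common multiple `(x - λ) (P, Q)`. Each step of the reduction is stable under perturbation, so this
pair reduces to some `(α (y - λ), β)` close to `((x - λ) s, 0)`. With `u` and `w` the derivatives
in `e`, at `e = 0` and `λ = x`, of the perturbations of the two entries, every step preserves the
sign of `P(x) w - Q(x) u`, which is `P(x)² > 0` at the start and, up to the factor `s`, the
derivative of `β` at the end. Hence `β > 0`, and since `β` is small compared with `α`, the linear
pair can be reduced further with the prescribed mass.

While the pair is linear, a step that multiplies the pair by `v - λ` can be inserted for any
`v > y`. Thus `λ_j` can be repeated once for each `i < j`, which accounts for `t_j ≤ j`.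
-/

section Tridiagonal

variable {R : Type*} [CommRing R]

/-- The `n × n` tridiagonal matrix with diagonal `a 0, a 1, …`, superdiagonal `b 0, b 1, …` and
subdiagonal `c 0, c 1, …`. -/
def tridiagonal (a b c : ℕ → R) (n : ℕ) : Matrix (Fin n) (Fin n) R :=
  Matrix.of fun i j =>
    if (i : ℕ) = j then a i
    else if (i : ℕ) + 1 = j then b i
    else if (j : ℕ) + 1 = i then c j
    else 0

theorem tridiagonal_submatrix_castSucc (a b c : ℕ → R) (n : ℕ) :
    (tridiagonal a b c (n + 1)).submatrix Fin.castSucc Fin.castSucc = tridiagonal a b c n := by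
  ext i j
  simp [tridiagonal]

theorem det_tridiagonal_submatrix (a b c : ℕ → R) (n : ℕ) :
    ((tridiagonal a b c (n + 2)).submatrix Fin.castSucc (Fin.last n).castSucc.succAbove).det =
      b n * (tridiagonal a b c n).det := by
  have hlast : (Fin.last n).castSucc.succAbove (Fin.last n) = Fin.last (n + 1) :=
    Fin.succAbove_castSucc_self _
  have hcast (j : Fin n) : (Fin.last n).castSucc.succAbove j.castSucc = j.castSucc.castSucc :=
    Fin.succAbove_of_castSucc_lt _ _ (by simp [Fin.lt_def])
  have hminor : ((tridiagonal a b c (n + 2)).submatrix Fin.castSucc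
      (Fin.last n).castSucc.succAbove).submatrix Fin.castSucc Fin.castSucc =
        tridiagonal a b c n := by
    ext i j
    simp [tridiagonal, hcast]
  rw [Matrix.det_succ_column _ (Fin.last n), Fin.sum_univ_castSucc, Finset.sum_eq_zero]
  · simp only [Fin.succAbove_last, hminor]
    simp [tridiagonal, hlast, ← two_mul]
  · intro i _
    have hne : (i : ℕ) ≠ n + 1 := by omega
    have hne' : (i : ℕ) ≠ n := by omega
    have hne'' : n + 1 + 1 ≠ (i : ℕ) := by omega
    simp [tridiagonal, hlast, hne, hne', hne'']

theorem det_tridiagonal_succ_succ (a b c : ℕ → R) (n : ℕ) :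
    (tridiagonal a b c (n + 2)).det =
      a (n + 1) * (tridiagonal a b c (n + 1)).det - b n * c n * (tridiagonal a b c n).det := by
  have hdiag : tridiagonal a b c (n + 2) (Fin.last (n + 1)) (Fin.last (n + 1)) = a (n + 1) := by
    simp [tridiagonal]
  have hsub : tridiagonal a b c (n + 2) (Fin.last (n + 1)) (Fin.last n).castSucc = c n := by
    have hne : n + 1 + 1 ≠ n := by omega
    simp [tridiagonal, hne]
  have hzero (j : Fin n) :
      tridiagonal a b c (n + 2) (Fin.last (n + 1)) j.castSucc.castSucc = 0 := by
    have hne : n + 1 ≠ (j : ℕ) := by omega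
    have hne' : n + 1 + 1 ≠ (j : ℕ) := by omega
    have hne'' : (j : ℕ) ≠ n := by omega
    simp [tridiagonal, hne, hne', hne'']
  have hsign : (-1 : R) ^ (n + 1 + n) = -1 := Odd.neg_one_pow ⟨n, by ring⟩
  rw [Matrix.det_succ_row _ (Fin.last (n + 1)), Fin.sum_univ_castSucc, Fin.sum_univ_castSucc,
    Finset.sum_eq_zero fun j _ => by rw [hzero, mul_zero, zero_mul]]
  simp only [Fin.succAbove_last, hdiag, hsub, det_tridiagonal_submatrix,
    tridiagonal_submatrix_castSucc, Fin.val_last, Fin.val_castSucc, hsign,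
    Even.neg_one_pow (Even.add_self (n + 1))]
  ring

/-- Transfer recursion of a chain of masses joined by links, the first link being attached to a
wall. If `p j` is the dynamic stiffness of the link below mass `j` and `μ j` the inertia term of
that mass, the pair at `n` consists of the determinant of the chain of `n` masses and of its leading
principal minor of order `n - 1`. At `n = 0` the second entry is `0`, for which the recursion is
uniform in `n`. -/
def chainPair (p μ : ℕ → R) : ℕ → R × R
  | 0 => (1, 0)
  | n + 1 =>
    let F := (chainPair p μ n).1
    let G := (chainPair p μ n).2
    (p (n + 1) * F - μ (n + 1) * (F + p (n + 1) * G), F + p (n + 1) * G)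

theorem chainPair_congr {p p' μ μ' : ℕ → R} {n : ℕ} (hp : ∀ j ≤ n, p j = p' j)
    (hμ : ∀ j ≤ n, μ j = μ' j) : chainPair p μ n = chainPair p' μ' n := by
  induction n with
  | zero => rfl
  | succ n ih =>
    simp only [chainPair, hp (n + 1) le_rfl, hμ (n + 1) le_rfl,
      ih (fun j hj => hp j (by omega)) fun j hj => hμ j (by omega)]

theorem det_tridiagonal_eq_chainPair (p μ : ℕ → R) (n : ℕ) :
    (tridiagonal (fun r => p (r + 1) + p (r + 2) - μ (r + 1)) (fun r => -p (r + 2))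
      (fun r => -p (r + 2)) n).det = (chainPair p μ n).1 + p (n + 1) * (chainPair p μ n).2 := by
  induction n using Nat.twoStepInduction with
  | zero => simp [chainPair]
  | one => simp [chainPair, tridiagonal]; ring
  | more n ih ih' =>
    rw [det_tridiagonal_succ_succ, ih, ih']
    simp only [chainPair]
    ring

end Tridiagonal

/-- The dynamic stiffness `k_j - λ b_j` of the `j`-th link. -/
noncomputable def linkPoly (k b : ℕ → ℝ) (j : ℕ) : ℝ[X] := C (k j) - X * C (b j)

/-- The pair `(f_n, g_n)` of the system with parameters `m`, `k`, `b`, with `g_0 = 0`. -/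
noncomputable def systemPair (m k b : ℕ → ℝ) (n : ℕ) : ℝ[X] × ℝ[X] :=
  chainPair (linkPoly k b) (fun j => X * C (m j)) n

theorem fpoly_eq_systemPair_fst (m k b : ℕ → ℝ) (n : ℕ) :
    fpoly m k b n = (systemPair m k b n).1 := by
  -- A link of stiffness `0` above the last mass gives the last diagonal entry the common shape.
  let p : ℕ → ℝ[X] := Function.update (linkPoly k b) (n + 1) 0
  have hp (j : ℕ) (hj : j ≤ n) : p j = linkPoly k b j := Function.update_of_ne (by omega) _ _
  have hp_last : p (n + 1) = 0 := Function.update_self _ _ _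
  have hmat : sysMat m k b n = tridiagonal (fun r => p (r + 1) + p (r + 2) - X * C (m (r + 1)))
      (fun r => -p (r + 2)) (fun r => -p (r + 2)) n := by
    ext1 i j
    have hi := hp (i + 1) (by omega)
    simp only [sysMat, triMat, tridiagonal, Matrix.sub_apply, Matrix.map_apply, Matrix.smul_apply,
      Matrix.add_apply, Matrix.of_apply, Matrix.diagonal_apply, Fin.ext_iff, smul_eq_mul]
    split_ifs with hdiag hlast hsup hsub
    · have hn : (i : ℕ) + 1 = n := by omega
      rw [hi, show (i : ℕ) + 2 = n + 1 by omega, hp_last, hn, linkPoly, C_add]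
      ring
    · rw [hi, hp (i + 2) (by omega), linkPoly, linkPoly]
      simp only [C_add]
      ring
    · rw [hp (i + 2) (by omega), linkPoly, ← hsup]
      simp only [zero_add, C_neg]
      ring
    · rw [hp (j + 2) (by omega), linkPoly, ← hsub]
      simp only [zero_add, C_neg]
      ring
    · simp
  rw [fpoly, hmat, det_tridiagonal_eq_chainPair p (fun j => X * C (m j)), hp_last, zero_mul,
    add_zero, chainPair_congr hp fun _ _ => rfl, systemPair]

/-- A system of `n` masses, with positive masses, positive stiffnesses and nonnegative inertances,
has the pair `(P, Q)` up to a common nonzero factor, and the masses `Ms` occur in it, in this order,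
at distinct positions listed by `idx`. -/
def Realizable (n : ℕ) (Ms : List ℝ) (P Q : ℝ[X]) : Prop :=
  ∃ m k b : ℕ → ℝ, (∀ j ∈ Finset.Icc 1 n, 0 < m j ∧ 0 < k j ∧ 0 ≤ b j) ∧
    (∃ idx : List ℕ, idx.Nodup ∧ (∀ i ∈ idx, i ∈ Finset.Icc 1 n) ∧ idx.map m = Ms) ∧
    ∃ s ≠ 0, C s * (systemPair m k b n).1 = P ∧ C s * (systemPair m k b n).2 = Q

namespace Realizable

theorem zero {s : ℝ} (hs : s ≠ 0) : Realizable 0 [] (C s) 0 :=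
  ⟨0, 0, 0, by simp, ⟨[], by simp⟩, s, hs, by simp [systemPair, chainPair]⟩

variable {n : ℕ} {Ms Ms' : List ℝ} {P Q : ℝ[X]}

theorem of_sublist (h : Realizable n Ms P Q) (hMs : Ms'.Sublist Ms) : Realizable n Ms' P Q := by
  obtain ⟨m, k, b, hpos, ⟨idx, hnodup, hmem, rfl⟩, hpair⟩ := h
  obtain ⟨idx', hsub, rfl⟩ := List.sublist_map_iff.mp hMs
  exact ⟨m, k, b, hpos, ⟨idx', hnodup.sublist hsub, fun i hi => hmem i (hsub.subset hi), rfl⟩,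
    hpair⟩

theorem attach (h : Realizable n Ms P Q) {m₁ b₁ v : ℝ} (hm₁ : 0 < m₁) (hb₁ : 0 < b₁) (hv : 0 < v) :
    Realizable (n + 1) (Ms ++ [m₁])
      (C b₁ * (C v - X) * P - X * C m₁ * (P + C b₁ * (C v - X) * Q))
      (P + C b₁ * (C v - X) * Q) := by
  obtain ⟨m, k, b, hpos, ⟨idx, hnodup, hmem, rfl⟩, s, hs, rfl, rfl⟩ := h
  let extend (f : ℕ → ℝ) (a : ℝ) : ℕ → ℝ := Function.update f (n + 1) a
  have extend_of_le (f : ℕ → ℝ) (a : ℝ) {j : ℕ} (hj : j ≤ n) : extend f a j = f j :=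
    Function.update_of_ne (by omega) _ _
  have extend_last (f : ℕ → ℝ) (a : ℝ) : extend f a (n + 1) = a := Function.update_self _ _ _
  have hlink : linkPoly (extend k (b₁ * v)) (extend b b₁) (n + 1) = C b₁ * (C v - X) := by
    rw [linkPoly, extend_last, extend_last, C_mul]
    ring
  have hinit : chainPair (linkPoly (extend k (b₁ * v)) (extend b b₁))
      (fun j => X * C (extend m m₁ j)) n = systemPair m k b n :=
    chainPair_congr
      (fun j hj => by rw [linkPoly, linkPoly, extend_of_le k _ hj, extend_of_le b _ hj])
      fun j hj => by rw [extend_of_le m _ hj]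
  refine ⟨extend m m₁, extend k (b₁ * v), extend b b₁, fun j hj => ?_,
    ⟨idx ++ [n + 1], ?_, ?_, ?_⟩, s, hs, ?_, ?_⟩
  · obtain ⟨hj1, hjn⟩ := Finset.mem_Icc.mp hj
    rcases hjn.lt_or_eq with hlt | rfl
    · have hle : j ≤ n := by omega
      rw [extend_of_le m _ hle, extend_of_le k _ hle, extend_of_le b _ hle]
      exact hpos j (Finset.mem_Icc.mpr ⟨hj1, hle⟩)
    · rw [extend_last, extend_last, extend_last]
      exact ⟨hm₁, mul_pos hb₁ hv, hb₁.le⟩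
  · refine List.Nodup.append hnodup (List.nodup_singleton _) ?_
    rw [List.disjoint_singleton]
    intro hmem'
    simpa using hmem _ hmem'
  · intro i hi
    rcases List.mem_append.mp hi with hi | hi
    · have := hmem i hi
      grind
    · grind
  · rw [List.map_append, List.map_singleton, extend_last, List.map_congr_left fun i hi =>
      extend_of_le m m₁ (Finset.mem_Icc.mp (hmem i hi)).2]
  · rw [systemPair, chainPair, hinit, hlink, extend_last]
    ring
  · rw [systemPair, chainPair, hinit, hlink]
    ring

end Realizable

/-- `Reduces l Ms Ns P Q P₀ Q₀` says that masses can be removed one at a time from the free end of a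
chain until the pair `(P, Q)` has become `(P₀, Q₀)`. Common factors `C v - X` of the pair are
cancelled on the way: the chain itself has the pair `(P, Q)` multiplied by the product of the
`C v - X` over `v ∈ Ns`.

Removing a mass `m` held by the link `b (v - λ)` inverts one step of `chainPair`. A `prescribed`
step divides the new pair by `C v - X`, so `m` is given and `v` and `b` are adapted to it. A `free`
step only needs `v` to be a root of `P + λ m Q`, so `v` is given and `m` is adapted to it. The list
`Ms` of the prescribed masses is in the order of the chain, and every `v` lies above `l`. -/
inductive Reduces (l : ℝ) : List ℝ → Multiset ℝ → ℝ[X] → ℝ[X] → ℝ[X] → ℝ[X] → Prop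
  | refl (P Q : ℝ[X]) : Reduces l [] 0 P Q P Q
  | free {Ms : List ℝ} {Ns : Multiset ℝ} {P Q R Q' P₀ Q₀ : ℝ[X]} {m b v : ℝ} (hm : 0 < m)
      (hb : 0 < b) (hv : l < v) (hQ : Q.eval v ≠ 0)
      (hR : P + X * C m * Q = C b * (C v - X) * R) (hQ' : Q - R = C b * Q')
      (h : Reduces l Ms Ns ((C v - X) * R) Q' P₀ Q₀) : Reduces l Ms (v ::ₘ Ns) P Q P₀ Q₀
  | prescribed {Ms : List ℝ} {Ns : Multiset ℝ} {P Q R Q' P₀ Q₀ : ℝ[X]} {m b v : ℝ} (hm : 0 < m)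
      (hb : 0 < b) (hv : l < v) (hQ : Q.eval v ≠ 0)
      (hR : P + X * C m * Q = C b * (C v - X) * R) (hQ' : Q - R = C b * (C v - X) * Q')
      (h : Reduces l Ms Ns R Q' P₀ Q₀) : Reduces l (Ms ++ [m]) Ns P Q P₀ Q₀

namespace Reduces

variable {l l' : ℝ} {Ms Ms' : List ℝ} {Ns Ns' : Multiset ℝ} {P Q P₁ Q₁ P₀ Q₀ : ℝ[X]}

theorem trans (h : Reduces l Ms Ns P Q P₁ Q₁) (h' : Reduces l Ms' Ns' P₁ Q₁ P₀ Q₀) :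
    Reduces l (Ms' ++ Ms) (Ns + Ns') P Q P₀ Q₀ := by
  induction h with
  | refl => simpa using h'
  | free hm hb hv hQ hR hQ' _ ih =>
    rw [Multiset.cons_add]
    exact .free hm hb hv hQ hR hQ' (ih h')
  | prescribed hm hb hv hQ hR hQ' _ ih =>
    rw [← List.append_assoc]
    exact .prescribed hm hb hv hQ hR hQ' (ih h')

theorem mono (h : Reduces l Ms Ns P Q P₀ Q₀) (hl : l' ≤ l) : Reduces l' Ms Ns P Q P₀ Q₀ := by
  induction h with
  | refl => exact .refl _ _
  | free hm hb hv hQ hR hQ' _ ih => exact .free hm hb (hl.trans_lt hv) hQ hR hQ' ih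
  | prescribed hm hb hv hQ hR hQ' _ ih => exact .prescribed hm hb (hl.trans_lt hv) hQ hR hQ' ih

theorem realizable {n : ℕ} {Ms₀ : List ℝ} (h : Reduces l Ms Ns P Q P₀ Q₀) (hl : 0 ≤ l)
    (h₀ : Realizable n Ms₀ P₀ Q₀) :
    Realizable (n + Ms.length + Multiset.card Ns) (Ms₀ ++ Ms)
      (P * (Ns.map fun v => C v - X).prod) (Q * (Ns.map fun v => C v - X).prod) := by
  induction h with
  | refl P Q => simpa using h₀
  | @free Ms Ns P Q R Q' P₀ Q₀ m b v hm hb hv _ hR hQ' _ ih =>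
    have hattach := ((ih h₀).attach hm hb (hl.trans_lt hv)).of_sublist
      (List.sublist_append_left _ _)
    set N : ℝ[X] := (Ns.map fun v => C v - X).prod
    rw [Multiset.card_cons, Multiset.map_cons, Multiset.prod_cons]
    convert hattach using 1
    · ring
    · linear_combination (C v - X) * N * hR - (C v - X) * N * X * C m * hQ'
    · linear_combination (C v - X) * N * hQ'
  | @prescribed Ms Ns P Q R Q' P₀ Q₀ m b v hm hb hv _ hR hQ' _ ih =>
    have hattach := (ih h₀).attach hm hb (hl.trans_lt hv)
    set N : ℝ[X] := (Ns.map fun v => C v - X).prod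
    rw [List.length_append, List.length_singleton, ← List.append_assoc]
    convert hattach using 1
    · ring
    · linear_combination N * hR - N * X * C m * hQ'
    · linear_combination N * hQ'

end Reduces

section Perturbation

open Filter Topology

/-- Coefficientwise convergence of polynomials of degree at most `d` along the filter `l`. -/
structure TendstoCoeff {α R : Type*} [Semiring R] [TopologicalSpace R] (l : Filter α) (d : ℕ)
    (p : α → R[X]) (q : R[X]) : Prop where
  natDegree_le : ∀ a, (p a).natDegree ≤ d
  tendsto_coeff : ∀ i, Tendsto (fun a => (p a).coeff i) l (𝓝 (q.coeff i))

namespace TendstoCoeff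

variable {α R : Type*} {l : Filter α} {d d' : ℕ}

section Semiring

variable [Semiring R] [TopologicalSpace R] {p p' : α → R[X]} {q q' : R[X]}

theorem const (hq : q.natDegree ≤ d) : TendstoCoeff l d (fun _ => q) q :=
  ⟨fun _ => hq, fun _ => tendsto_const_nhds⟩

theorem of_tendsto {c : α → R} {c₀ : R} (hc : Tendsto c l (𝓝 c₀)) :
    TendstoCoeff l 0 (fun a => C (c a)) (C c₀) where
  natDegree_le a := (natDegree_C _).le
  tendsto_coeff i := by
    simp only [coeff_C]
    split_ifs
    exacts [hc, tendsto_const_nhds]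

theorem mono (h : TendstoCoeff l d p q) (hd : d ≤ d') : TendstoCoeff l d' p q :=
  ⟨fun a => (h.natDegree_le a).trans hd, h.tendsto_coeff⟩

theorem add [ContinuousAdd R] (h : TendstoCoeff l d p q) (h' : TendstoCoeff l d p' q') :
    TendstoCoeff l d (fun a => p a + p' a) (q + q') where
  natDegree_le a := natDegree_add_le_of_degree_le (h.natDegree_le a) (h'.natDegree_le a)
  tendsto_coeff i := by
    simpa only [coeff_add] using (h.tendsto_coeff i).add (h'.tendsto_coeff i)

theorem mul [IsTopologicalSemiring R] (h : TendstoCoeff l d p q) (h' : TendstoCoeff l d' p' q') :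
    TendstoCoeff l (d + d') (fun a => p a * p' a) (q * q') where
  natDegree_le a := natDegree_mul_le_of_le (h.natDegree_le a) (h'.natDegree_le a)
  tendsto_coeff i := by
    simp only [coeff_mul]
    exact tendsto_finsetSum _ fun _ _ => (h.tendsto_coeff _).mul (h'.tendsto_coeff _)

theorem natDegree_limit_le [T2Space R] [l.NeBot] (h : TendstoCoeff l d p q) : q.natDegree ≤ d := by
  refine natDegree_le_iff_coeff_eq_zero.mpr fun i hi => tendsto_nhds_unique (h.tendsto_coeff i) ?_
  simp only [fun a => coeff_eq_zero_of_natDegree_lt ((h.natDegree_le a).trans_lt hi)]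
  exact tendsto_const_nhds

theorem tendsto_eval [IsTopologicalSemiring R] [T2Space R] [l.NeBot] (h : TendstoCoeff l d p q)
    {c : α → R} {c₀ : R} (hc : Tendsto c l (𝓝 c₀)) :
    Tendsto (fun a => (p a).eval (c a)) l (𝓝 (q.eval c₀)) := by
  simp only [eval_eq_sum_range' (Nat.lt_succ_of_le h.natDegree_limit_le),
    fun a => eval_eq_sum_range' (Nat.lt_succ_of_le (h.natDegree_le a))]
  exact tendsto_finsetSum _ fun _ _ => (h.tendsto_coeff _).mul (hc.pow _)

end Semiring

section Ring

variable [Ring R] [TopologicalSpace R] [IsTopologicalRing R] {p p' : α → R[X]} {q q' : R[X]}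

theorem sub (h : TendstoCoeff l d p q) (h' : TendstoCoeff l d p' q') :
    TendstoCoeff l d (fun a => p a - p' a) (q - q') where
  natDegree_le a := (natDegree_sub_le_of_le (h.natDegree_le a) (h'.natDegree_le a)).trans
    (max_self d).le
  tendsto_coeff i := by
    simpa only [coeff_sub] using (h.tendsto_coeff i).sub (h'.tendsto_coeff i)

theorem divByMonic_X_sub_C [T2Space R] [l.NeBot] (h : TendstoCoeff l (d + 1) p q) {c : α → R}
    {c₀ : R} (hc : Tendsto c l (𝓝 c₀)) :
    TendstoCoeff l d (fun a => p a /ₘ (X - C (c a))) (q /ₘ (X - C c₀)) where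
  natDegree_le a := by
    nontriviality R
    rw [natDegree_divByMonic _ (monic_X_sub_C _), natDegree_X_sub_C]
    exact Nat.sub_le_of_le_add (h.natDegree_le a)
  tendsto_coeff i := by
    have hcoeff {r : R[X]} (hr : r.natDegree ≤ d + 1) (a : R) :
        (r /ₘ (X - C a)).coeff i =
          ∑ j ∈ Finset.Icc (i + 1) (d + 1), a ^ (j - (i + 1)) * r.coeff j := by
      rw [coeff_divByMonic_X_sub_C]
      refine Finset.sum_subset (Finset.Icc_subset_Icc_right hr) fun j hj hj' => ?_
      rw [coeff_eq_zero_of_natDegree_lt (by grind), mul_zero]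
    simp only [hcoeff h.natDegree_limit_le, fun a => hcoeff (h.natDegree_le a)]
    exact tendsto_finsetSum _ fun j _ => (hc.pow _).mul (h.tendsto_coeff j)

end Ring

end TendstoCoeff

theorem exists_tendsto_forall_eventually_mem {α E : Type*} [PseudoMetricSpace E] [ProperSpace E]
    {l : Filter α} {Z : α → Set E} (hZ : ∀ a, IsClosed (Z a)) {v : E}
    (h : ∀ δ > 0, ∀ᶠ a in l, (Z a ∩ Metric.ball v δ).Nonempty) :
    ∃ f : α → E, Tendsto f l (𝓝 v) ∧ ∀ᶠ a in l, f a ∈ Z a := by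
  have hnearest (a : α) : ∃ y, ∀ z ∈ Z a, y ∈ Z a ∧ dist y v ≤ dist z v := by
    by_cases hne : (Z a).Nonempty
    · obtain ⟨y, hy, hdist⟩ := (hZ a).exists_infDist_eq_dist hne v
      refine ⟨y, fun z hz => ⟨hy, ?_⟩⟩
      rw [dist_comm y, dist_comm z, ← hdist]
      exact Metric.infDist_le_dist_of_mem hz
    · exact ⟨v, fun z hz => (hne ⟨z, hz⟩).elim⟩
  choose f hf using hnearest
  refine ⟨f, Metric.tendsto_nhds.mpr fun δ hδ => ?_, ?_⟩
  · filter_upwards [h δ hδ] with a ⟨z, hz, hzv⟩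
    exact (hf a z hz).2.trans_lt hzv
  · filter_upwards [h 1 one_pos] with a ⟨z, hz, _⟩
    exact (hf a z hz).1

theorem exists_mem_Icc_eq_zero_of_mul_neg {f : ℝ → ℝ} {a b : ℝ} (hab : a ≤ b)
    (hf : ContinuousOn f (Set.Icc a b)) (h : f a * f b < 0) : ∃ y ∈ Set.Icc a b, f y = 0 := by
  rcases mul_neg_iff.mp h with ⟨ha, hb⟩ | ⟨ha, hb⟩
  · exact intermediate_value_Icc' hab hf ⟨hb.le, ha.le⟩
  · exact intermediate_value_Icc hab hf ⟨ha.le, hb.le⟩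

theorem exists_pos_lt_eval_mul_eval_neg {S : ℝ[X]} {v : ℝ} (hS : S.eval v ≠ 0) {δ : ℝ}
    (hδ : 0 < δ) : ∃ r, 0 < r ∧ r < δ ∧
      ((C v - X) * S).eval (v - r) * ((C v - X) * S).eval (v + r) < 0 := by
  have hprod : Tendsto (fun r => S.eval (v - r) * S.eval (v + r)) (𝓝[>] 0)
      (𝓝 (S.eval v * S.eval v)) := by
    have hcont : Continuous fun r => S.eval (v - r) * S.eval (v + r) := by fun_prop
    simpa using (hcont.tendsto 0).mono_left nhdsWithin_le_nhds
  obtain ⟨r, hpos, hr, hrδ⟩ := ((hprod.eventually_const_lt (mul_self_pos.mpr hS)).and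
    (Ioo_mem_nhdsGT hδ)).exists
  refine ⟨r, hr, hrδ, ?_⟩
  simp only [eval_mul, eval_sub, eval_C, eval_X]
  linear_combination r ^ 2 * hpos

theorem TendstoCoeff.exists_tendsto_eventually_isRoot {α : Type*} {l : Filter α} [l.NeBot] {d : ℕ}
    {p : α → ℝ[X]} {S : ℝ[X]} {v : ℝ} (h : TendstoCoeff l d p ((C v - X) * S))
    (hS : S.eval v ≠ 0) : ∃ f : α → ℝ, Tendsto f l (𝓝 v) ∧ ∀ᶠ a in l, (p a).IsRoot (f a) := by
  refine exists_tendsto_forall_eventually_mem (Z := fun a => {y | (p a).IsRoot y})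
    (fun a => isClosed_eq (p a).continuous continuous_const) fun δ hδ => ?_
  obtain ⟨r, hr, hrδ, hneg⟩ := exists_pos_lt_eval_mul_eval_neg hS hδ
  have hlim := (h.tendsto_eval (tendsto_const_nhds (x := v - r))).mul
    (h.tendsto_eval (tendsto_const_nhds (x := v + r)))
  filter_upwards [hlim.eventually_lt_const hneg] with a ha
  obtain ⟨y, hy, hroot⟩ := exists_mem_Icc_eq_zero_of_mul_neg (by linarith)
    (p a).continuous.continuousOn ha
  refine ⟨y, hroot, ?_⟩
  rw [Metric.mem_ball, Real.dist_eq, abs_lt]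
  constructor <;> linarith [hy.1, hy.2]

/-- A family `p e` of polynomials of degree at most `d`, with limit `(C x - X) * P` as `e ↓ 0`,
whose value at the root `x` of the limit is `e * u + o(e)`. -/
structure Deformation (x : ℝ) (d : ℕ) (P : ℝ[X]) (u : ℝ) (p : ℝ → ℝ[X]) : Prop where
  tendstoCoeff : TendstoCoeff (𝓝[>] 0) d p ((C x - X) * P)
  tendsto_eval_div : Tendsto (fun e => (p e).eval x / e) (𝓝[>] 0) (𝓝 u)

namespace Deformation

variable {x u u' v b : ℝ} {d k : ℕ} {P P' A : ℝ[X]} {p p' a : ℝ → ℝ[X]}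

theorem mono {d' : ℕ} (h : Deformation x d P u p) (hd : d ≤ d') : Deformation x d' P u p :=
  ⟨h.tendstoCoeff.mono hd, h.tendsto_eval_div⟩

theorem add (h : Deformation x d P u p) (h' : Deformation x d P' u' p') :
    Deformation x d (P + P') (u + u') (fun e => p e + p' e) where
  tendstoCoeff := by
    rw [mul_add]
    exact h.tendstoCoeff.add h'.tendstoCoeff
  tendsto_eval_div := by
    simpa only [eval_add, add_div] using h.tendsto_eval_div.add h'.tendsto_eval_div

theorem sub (h : Deformation x d P u p) (h' : Deformation x d P' u' p') :
    Deformation x d (P - P') (u - u') (fun e => p e - p' e) where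
  tendstoCoeff := by
    rw [mul_sub]
    exact h.tendstoCoeff.sub h'.tendstoCoeff
  tendsto_eval_div := by
    simpa only [eval_sub, sub_div] using h.tendsto_eval_div.sub h'.tendsto_eval_div

theorem tendsto_eval (h : Deformation x d P u p) {c : ℝ → ℝ} {c₀ : ℝ}
    (hc : Tendsto c (𝓝[>] 0) (𝓝 c₀)) :
    Tendsto (fun e => (p e).eval (c e)) (𝓝[>] 0) (𝓝 ((x - c₀) * P.eval c₀)) := by
  simpa only [eval_mul, eval_sub, eval_C, eval_X] using h.tendstoCoeff.tendsto_eval hc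

theorem mul_left (h : Deformation x d P u p) (ha : TendstoCoeff (𝓝[>] 0) k a A) :
    Deformation x (k + d) (A * P) (A.eval x * u) (fun e => a e * p e) where
  tendstoCoeff := by
    rw [mul_left_comm]
    exact ha.mul h.tendstoCoeff
  tendsto_eval_div := by
    simpa only [eval_mul, mul_div_assoc] using
      (ha.tendsto_eval tendsto_const_nhds).mul h.tendsto_eval_div

theorem C_inv_mul (h : Deformation x d (C b * P) u p) (hb : b ≠ 0) {β : ℝ → ℝ}
    (hβ : Tendsto β (𝓝[>] 0) (𝓝 b)) :
    Deformation x d P (b⁻¹ * u) (fun e => C (β e)⁻¹ * p e) := by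
  have hmul := h.mul_left (TendstoCoeff.of_tendsto (hβ.inv₀ hb))
  rwa [← mul_assoc, ← C_mul, inv_mul_cancel₀ hb, C_1, one_mul, eval_C, zero_add] at hmul

theorem exists_tendsto_eventually_isRoot (h : Deformation x d ((C v - X) * P) u p) (hxv : x ≠ v)
    (hP : P.eval v ≠ 0) :
    ∃ ν : ℝ → ℝ, Tendsto ν (𝓝[>] 0) (𝓝 v) ∧ ∀ᶠ e in 𝓝[>] 0, (p e).IsRoot (ν e) := by
  have hlimit := h.tendstoCoeff
  rw [mul_left_comm] at hlimit
  exact hlimit.exists_tendsto_eventually_isRoot (by simpa [sub_eq_zero] using ⟨hxv, hP⟩)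

theorem exists_quotient (h : Deformation x (d + 1) ((C v - X) * P) u p) (hxv : x ≠ v) {ν : ℝ → ℝ}
    (hν : Tendsto ν (𝓝[>] 0) (𝓝 v)) (hroot : ∀ᶠ e in 𝓝[>] 0, (p e).IsRoot (ν e)) :
    ∃ r : ℝ → ℝ[X], Deformation x d P (u / (v - x)) r ∧
      ∀ᶠ e in 𝓝[>] 0, p e = (C (ν e) - X) * r e := by
  have hfactor : ∀ᶠ e in 𝓝[>] 0, p e = (C (ν e) - X) * -(p e /ₘ (X - C (ν e))) := by
    filter_upwards [hroot] with e he
    rw [← neg_sub, neg_mul_neg, mul_divByMonic_eq_iff_isRoot.mpr he]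
  refine ⟨fun e => -(p e /ₘ (X - C (ν e))), ⟨?_, ?_⟩, hfactor⟩
  · have hdiv := (TendstoCoeff.const (by simp)).sub (h.tendstoCoeff.divByMonic_X_sub_C hν)
      (q := 0)
    have hquot : (C x - X) * ((C v - X) * P) = (X - C v) * -((C x - X) * P) := by ring
    rw [hquot, mul_divByMonic_cancel_left _ (monic_X_sub_C v), zero_sub, neg_neg] at hdiv
    simpa only [zero_sub] using hdiv
  · have hlim := h.tendsto_eval_div.div (hν.sub_const x) (sub_ne_zero.mpr hxv.symm)
    refine hlim.congr' ?_
    filter_upwards [hfactor, hν.eventually_ne hxv.symm] with e he hne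
    have heval := congrArg (eval x) he
    rw [eval_mul, eval_sub, eval_C, eval_X] at heval
    rw [Pi.div_apply, heval]
    field_simp [sub_ne_zero.mpr hne]

end Deformation

/-- Deformations of the two polynomials of a pair for which the Wronskian-type quantity
`P(x) w - Q(x) u` of the limits and the velocities is positive. -/
def PairDeformation (x : ℝ) (d : ℕ) (P Q : ℝ[X]) (p q : ℝ → ℝ[X]) : Prop :=
  ∃ u w : ℝ, Deformation x (d + 1) P u p ∧ Deformation x d Q w q ∧
    0 < P.eval x * w - Q.eval x * u

theorem Deformation.add_X_mul_C_mul {x u w m : ℝ} {d : ℕ} {P Q : ℝ[X]} {p q : ℝ → ℝ[X]}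
    (hp : Deformation x (d + 1) P u p) (hq : Deformation x d Q w q) {μ : ℝ → ℝ}
    (hμ : Tendsto μ (𝓝[>] 0) (𝓝 m)) :
    Deformation x (d + 1) (P + X * C m * Q) (u + x * m * w)
      (fun e => p e + X * C (μ e) * q e) := by
  have hmul := hq.mul_left ((TendstoCoeff.const natDegree_X_le).mul (TendstoCoeff.of_tendsto hμ))
  rw [eval_mul, eval_X, eval_C] at hmul
  exact hp.add (hmul.mono (by omega))

theorem Deformation.exists_mass_eventually_isRoot {x u w m v : ℝ} {d k : ℕ} {P Q : ℝ[X]}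
    {p q : ℝ → ℝ[X]} (hp : Deformation x d P u p) (hq : Deformation x k Q w q) (hv : v ≠ 0)
    (hxv : x ≠ v) (hQ : Q.eval v ≠ 0) (hroot : (P + X * C m * Q).IsRoot v) :
    ∃ μ : ℝ → ℝ, Tendsto μ (𝓝[>] 0) (𝓝 m) ∧
      ∀ᶠ e in 𝓝[>] 0, (p e + X * C (μ e) * q e).IsRoot v := by
  have hqv := hq.tendsto_eval (tendsto_const_nhds (x := v))
  have hQv : (x - v) * Q.eval v ≠ 0 := mul_ne_zero (sub_ne_zero.mpr hxv) hQ
  refine ⟨fun e => -(p e).eval v / (v * (q e).eval v), ?_, ?_⟩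
  · have hlim := (hp.tendsto_eval (tendsto_const_nhds (x := v))).neg.div (hqv.const_mul v)
      (mul_ne_zero hv hQv)
    have hm_eq : -((x - v) * P.eval v) / (v * ((x - v) * Q.eval v)) = m := by
      simp only [IsRoot.def, eval_add, eval_mul, eval_X, eval_C] at hroot
      rw [div_eq_iff (mul_ne_zero hv hQv)]
      linear_combination -(x - v) * hroot
    rwa [hm_eq] at hlim
  · filter_upwards [hqv.eventually_ne hQv] with e he
    simp only [IsRoot.def, eval_add, eval_mul, eval_X, eval_C]
    field_simp
    ring

theorem Deformation.exists_link_eventually_isRoot {x u w b v : ℝ} {d k : ℕ} {R Q : ℝ[X]}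
    {s q : ℝ → ℝ[X]} {ν : ℝ → ℝ} (hs : Deformation x d (C b * R) u s) (hq : Deformation x k Q w q)
    (hxv : x ≠ v) (hb : b ≠ 0) (hRQ : R.eval v = Q.eval v) (hQ : Q.eval v ≠ 0)
    (hν : Tendsto ν (𝓝[>] 0) (𝓝 v)) :
    ∃ β : ℝ → ℝ, Tendsto β (𝓝[>] 0) (𝓝 b) ∧
      ∀ᶠ e in 𝓝[>] 0, (q e - C (β e)⁻¹ * s e).IsRoot (ν e) := by
  have hqν := hq.tendsto_eval hν
  have hsν := hs.tendsto_eval hν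
  rw [eval_mul, eval_C, hRQ] at hsν
  have hxv' : x - v ≠ 0 := sub_ne_zero.mpr hxv
  refine ⟨fun e => (s e).eval (ν e) / (q e).eval (ν e), ?_, ?_⟩
  · have hlim := hsν.div hqν (mul_ne_zero hxv' hQ)
    rwa [mul_left_comm, mul_div_cancel_right₀ _ (mul_ne_zero hxv' hQ)] at hlim
  · filter_upwards [hsν.eventually_ne (mul_ne_zero hxv' (mul_ne_zero hb hQ))] with e hse
    rw [IsRoot.def, eval_sub, eval_mul, eval_C, inv_div, div_mul_cancel₀ _ hse, sub_self]

namespace PairDeformation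

variable {x m b v : ℝ} {d : ℕ} {P Q R Q' : ℝ[X]} {p q : ℝ → ℝ[X]}

theorem free_step (h : PairDeformation x d P Q p q) (hx : 0 < x) (hxv : x < v) (hm : 0 < m)
    (hb : 0 < b) (hQ : Q.eval v ≠ 0) (hR : P + X * C m * Q = C b * (C v - X) * R)
    (hQ' : Q - R = C b * Q') :
    ∃ (μ : ℝ → ℝ) (r q' : ℝ → ℝ[X]),
      PairDeformation x d ((C v - X) * R) Q' (fun e => (C v - X) * r e) q' ∧
      ∀ᶠ e in 𝓝[>] 0, 0 < μ e ∧ (q e).eval v ≠ 0 ∧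
        p e + X * C (μ e) * q e = C b * (C v - X) * r e ∧ q e - r e = C b * q' e := by
  obtain ⟨u, w, hp, hq, hW⟩ := h
  have hvx : v - x ≠ 0 := sub_ne_zero.mpr hxv.ne'
  have hQv : (x - v) * Q.eval v ≠ 0 := mul_ne_zero (sub_ne_zero.mpr hxv.ne) hQ
  obtain ⟨μ, hμ, hroot⟩ := hp.exists_mass_eventually_isRoot hq (hx.trans hxv).ne' hxv.ne hQ
    (m := m) (by rw [hR]; simp)
  have hsum := hp.add_X_mul_C_mul hq hμ
  rw [hR, mul_comm (C b), mul_assoc] at hsum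
  obtain ⟨s, hs, hfactor⟩ := hsum.exists_quotient hxv.ne tendsto_const_nhds hroot
  have hr := hs.C_inv_mul hb.ne' tendsto_const_nhds
  have hp' := hr.mul_left (TendstoCoeff.const (q := C v - X) (d := 1) (by compute_degree))
  have hdiff := hq.sub hr
  rw [hQ'] at hdiff
  refine ⟨μ, _, _, ⟨_, _, hp'.mono (by omega), hdiff.C_inv_mul hb.ne' tendsto_const_nhds, ?_⟩, ?_⟩
  · have hRx := congrArg (eval x) hR
    have hQ'x := congrArg (eval x) hQ'
    simp only [eval_add, eval_sub, eval_mul, eval_X, eval_C] at hRx hQ'x ⊢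
    refine (div_pos hW (pow_pos hb 2)).trans_eq ?_
    rw [eq_sub_of_add_eq hRx, eq_add_of_sub_eq hQ'x]
    field_simp
    ring
  · filter_upwards [hfactor, hμ.eventually_const_lt hm,
      (hq.tendsto_eval tendsto_const_nhds).eventually_ne hQv] with e he hme hqe
    have hbb : C b * C b⁻¹ = (1 : ℝ[X]) := by rw [← C_mul, mul_inv_cancel₀ hb.ne', C_1]
    refine ⟨hme, hqe, ?_, ?_⟩
    · linear_combination he - (C v - X) * s e * hbb
    · linear_combination -(q e - C b⁻¹ * s e) * hbb

theorem prescribed_step (h : PairDeformation x (d + 1) P Q p q) (hxv : x < v) (hb : 0 < b)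
    (hQ : Q.eval v ≠ 0) (hR : P + X * C m * Q = C b * (C v - X) * R)
    (hQ' : Q - R = C b * (C v - X) * Q') :
    ∃ (β ν : ℝ → ℝ) (r q' : ℝ → ℝ[X]), PairDeformation x d R Q' r q' ∧
      Tendsto ν (𝓝[>] 0) (𝓝 v) ∧
      ∀ᶠ e in 𝓝[>] 0, 0 < β e ∧ (q e).eval (ν e) ≠ 0 ∧
        p e + X * C m * q e = C (β e) * (C (ν e) - X) * r e ∧
        q e - r e = C (β e) * (C (ν e) - X) * q' e := by
  obtain ⟨u, w, hp, hq, hW⟩ := h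
  have hvx : v - x ≠ 0 := sub_ne_zero.mpr hxv.ne'
  have hRv : R.eval v = Q.eval v := by
    rw [eq_comm, ← sub_eq_zero, ← eval_sub, hQ']
    simp
  have hsum := hp.add_X_mul_C_mul hq tendsto_const_nhds (m := m)
  rw [hR, mul_comm (C b), mul_assoc] at hsum
  obtain ⟨ν, hν, hroot⟩ := hsum.exists_tendsto_eventually_isRoot hxv.ne
    (by simpa [hRv] using ⟨hb.ne', hQ⟩)
  obtain ⟨s, hs, hfactor⟩ := hsum.exists_quotient hxv.ne hν hroot
  obtain ⟨β, hβ, hdiff_root⟩ := hs.exists_link_eventually_isRoot hq hxv.ne hb.ne' hRv hQ hν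
  have hr := hs.C_inv_mul hb.ne' hβ
  have hdiff := hq.sub hr
  rw [hQ', mul_comm (C b), mul_assoc] at hdiff
  obtain ⟨s', hs', hfactor'⟩ := hdiff.exists_quotient hxv.ne hν hdiff_root
  refine ⟨β, ν, _, _, ⟨_, _, hr, hs'.C_inv_mul hb.ne' hβ, ?_⟩, hν, ?_⟩
  · have hRx := congrArg (eval x) hR
    have hQ'x := congrArg (eval x) hQ'
    simp only [eval_add, eval_sub, eval_mul, eval_X, eval_C] at hRx hQ'x ⊢
    refine (div_pos hW (pow_pos (mul_pos hb (sub_pos.mpr hxv)) 2)).trans_eq ?_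
    rw [eq_sub_of_add_eq hRx, eq_add_of_sub_eq hQ'x]
    field_simp
    ring
  · filter_upwards [hfactor, hfactor', hβ.eventually_const_lt hb,
      (hq.tendsto_eval hν).eventually_ne (mul_ne_zero (sub_ne_zero.mpr hxv.ne) hQ)]
      with e he he' hβe hqe
    have hββ : C (β e) * C (β e)⁻¹ = (1 : ℝ[X]) := by
      rw [← C_mul, mul_inv_cancel₀ hβe.ne', C_1]
    refine ⟨hβe, hqe, ?_, ?_⟩
    · linear_combination he - (C (ν e) - X) * s e * hββ
    · linear_combination he' - (C (ν e) - X) * s' e * hββ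

end PairDeformation

theorem Reduces.exists_perturbation {l x : ℝ} {Ms : List ℝ} {Ns : Multiset ℝ} {P Q P₀ Q₀ : ℝ[X]}
    {p q : ℝ → ℝ[X]} (h : Reduces l Ms Ns P Q P₀ Q₀) (hx : 0 < x) (hxl : x ≤ l)
    (hpq : PairDeformation x Ms.length P Q p q) :
    ∃ p₀ q₀ : ℝ → ℝ[X], PairDeformation x 0 P₀ Q₀ p₀ q₀ ∧
      ∀ᶠ e in 𝓝[>] 0, Reduces l Ms Ns (p e) (q e) (p₀ e) (q₀ e) := by
  induction h generalizing p q with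
  | refl => exact ⟨p, q, hpq, .of_forall fun _ => .refl _ _⟩
  | free hm hb hv hQ hR hQ' _ ih =>
    obtain ⟨μ, r, q', hpair, hstep⟩ := hpq.free_step hx (hxl.trans_lt hv) hm hb hQ hR hQ'
    obtain ⟨p₀, q₀, hpair₀, hred⟩ := ih hpair
    refine ⟨p₀, q₀, hpair₀, ?_⟩
    filter_upwards [hred, hstep] with e he ⟨hμ, hqe, hr, hq'⟩
    exact .free hμ hb hv hqe hr hq' he
  | prescribed hm hb hv hQ hR hQ' _ ih =>
    rw [List.length_append, List.length_singleton] at hpq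
    obtain ⟨β, ν, r, q', hpair, hν, hstep⟩ := hpq.prescribed_step (hxl.trans_lt hv) hb hQ hR hQ'
    obtain ⟨p₀, q₀, hpair₀, hred⟩ := ih hpair
    refine ⟨p₀, q₀, hpair₀, ?_⟩
    filter_upwards [hred, hν.eventually_const_lt hv, hstep] with e he hνe ⟨hβ, hqe, hr, hq'⟩
    exact .prescribed hm hβ hνe hqe hr hq' he

namespace PairDeformation

variable {x s : ℝ} {d : ℕ} {P Q : ℝ[X]} {p q : ℝ → ℝ[X]}

theorem of_eval_ne_zero (hP : P.natDegree ≤ d) (hQ : Q.degree < d) (hPx : P.eval x ≠ 0) :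
    PairDeformation x d P Q (fun _ => (C x - X) * P) (fun e => (C x - X) * Q + C e * P) := by
  have hlin : (C x - X : ℝ[X]).natDegree ≤ 1 := by compute_degree
  have hQ' : ((C x - X) * Q).natDegree ≤ d := by
    rcases eq_or_ne Q 0 with rfl | hQ0
    · simp
    · have := (natDegree_lt_iff_degree_lt hQ0).mpr hQ
      exact (natDegree_mul_le_of_le hlin le_rfl).trans (by omega)
  have hid : Tendsto (fun e : ℝ => e) (𝓝[>] 0) (𝓝 0) := tendsto_id.mono_left nhdsWithin_le_nhds
  refine ⟨0, P.eval x, ⟨.const ((natDegree_mul_le_of_le hlin hP).trans (by omega)), by simp⟩,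
    ⟨?_, ?_⟩, by simpa using hPx⟩
  · have hscaled := (TendstoCoeff.of_tendsto hid).mul (TendstoCoeff.const hP (l := 𝓝[>] 0))
    simpa using (TendstoCoeff.const hQ').add (hscaled.mono (zero_add d).le)
  · refine tendsto_const_nhds.congr' ?_
    filter_upwards [self_mem_nhdsWithin] with e he
    have he0 : e ≠ 0 := (Set.mem_Ioi.mp he).ne'
    simp [he0]

theorem eventually_eq_linear (h : PairDeformation x 0 (C s) 0 p q) (hs : 0 < s) (M : ℝ)
    {U : Set ℝ} (hU : U ∈ 𝓝 x) :
    ∀ᶠ e in 𝓝[>] 0, ∃ α β, 0 < α ∧ 0 < β ∧ M * β < α ∧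
      ∃ y ∈ U, p e = C α * (C y - X) ∧ q e = C β := by
  obtain ⟨u, w, hp, hq, hW⟩ := h
  have hw : 0 < w := by
    rw [eval_C, eval_zero, zero_mul, sub_zero] at hW
    exact pos_of_mul_pos_right hW hs.le
  have hα : Tendsto (fun e => -(p e).coeff 1) (𝓝[>] 0) (𝓝 s) := by
    simpa [coeff_X, coeff_C] using (hp.tendstoCoeff.tendsto_coeff 1).neg
  have hαy : Tendsto (fun e => (p e).coeff 0) (𝓝[>] 0) (𝓝 (x * s)) := by
    simpa using hp.tendstoCoeff.tendsto_coeff 0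
  have hβ : Tendsto (fun e => (q e).coeff 0) (𝓝[>] 0) (𝓝 0) := by
    simpa using hq.tendstoCoeff.tendsto_coeff 0
  have hMβ : Tendsto (fun e => M * (q e).coeff 0) (𝓝[>] 0) (𝓝 0) := by
    simpa using hβ.const_mul M
  have hy : Tendsto (fun e => (p e).coeff 0 / -(p e).coeff 1) (𝓝[>] 0) (𝓝 x) := by
    have hlim := hαy.div hα hs.ne'
    rwa [mul_div_cancel_right₀ x hs.ne'] at hlim
  filter_upwards [hα.eventually_const_lt hs, hMβ.eventually_lt hα hs, hy.eventually_mem hU,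
    hq.tendsto_eval_div.eventually_const_lt hw, self_mem_nhdsWithin] with e hαe hMe hye hwe he
  have hpe := eq_X_add_C_of_natDegree_le_one (hp.tendstoCoeff.natDegree_le e)
  have hqe := eq_C_of_natDegree_le_zero (hq.tendstoCoeff.natDegree_le e)
  refine ⟨_, _, hαe, ?_, hMe, _, hye, ?_, hqe⟩
  · rw [hqe, eval_C] at hwe
    exact (div_pos_iff_of_pos_right he).mp hwe
  · rw [mul_sub, ← C_mul, mul_div_cancel₀ _ hαe.ne']
    nth_rw 1 [hpe]
    rw [C_neg]
    ring

end PairDeformation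

theorem exists_reduces_linear {M x α β : ℝ} (hM : 0 < M) (hx : 0 < x) (hα : 0 < α) (hβ : 0 < β)
    (hMβ : M * β < α) (T : Finset ℝ) (hT : ∀ y ∈ T, x < y) :
    ∃ s > 0, Reduces x [M] T.val (C α * (C x - X)) (C β) (C s) 0 := by
  induction T using Finset.induction_on_min generalizing x α β with
  | empty =>
    have hd : 0 < α - M * β := sub_pos.mpr hMβ
    refine ⟨β, hβ, .prescribed (Ms := []) hM (b := (α - M * β) / β) (v := α * x / (α - M * β))
      (by positivity) ?_ (by simpa using hβ.ne') ?_ (by simp) (.refl _ _)⟩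
    · rw [lt_div_iff₀ hd]
      linarith [mul_pos hx (mul_pos hM hβ)]
    · refine Polynomial.funext fun r => ?_
      simp only [eval_add, eval_mul, eval_X, eval_C, eval_sub]
      field_simp
      ring
  | insert y T hyT ih =>
    have hxy : x < y := hT y (Finset.mem_insert_self y T)
    have hy : 0 < y := hx.trans hxy
    -- `c` stands for `b ρ / β`; compare `P + X m Q` and `b (y - X) ρ` at `0`.
    obtain ⟨c, hc, hcy⟩ : ∃ c, 0 < c ∧ α * x = c * (y * β) :=
      ⟨α * x / (y * β), by positivity, by field_simp⟩
    obtain ⟨ρ, hρ_eq⟩ : ∃ ρ, ρ = β * M / (M + c) := ⟨_, rfl⟩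
    have hρ : 0 < ρ := by rw [hρ_eq]; positivity
    have hβ' : M * (ρ / (M + c)) < ρ := by
      rw [← mul_div_assoc, div_lt_iff₀ (by positivity)]
      linarith [mul_pos hρ hc]
    obtain ⟨s, hs, hred⟩ := ih hy hρ (by positivity) hβ' hyT
    rw [mul_comm (C ρ)] at hred
    refine ⟨s, hs, ?_⟩
    rw [Finset.insert_val_of_notMem fun hmem => (hyT y hmem).false]
    refine .free (m := α * (y - x) / (y * β)) (b := c * (M + c) / M)
      (div_pos (mul_pos hα (sub_pos.mpr hxy)) (by positivity)) (by positivity) hxy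
      (by simpa using hβ.ne') ?_ ?_ (hred.mono hxy.le)
    · refine Polynomial.funext fun r => ?_
      simp only [eval_add, eval_mul, eval_X, eval_C, eval_sub]
      rw [hρ_eq]
      field_simp
      linear_combination (y - r) * hcy
    · rw [← C_sub, ← C_mul, hρ_eq]
      congr 1
      field_simp
      ring

theorem Reduces.exists_C_sub_X_mul {l x M s : ℝ} {Ms : List ℝ} {Ns : Multiset ℝ} {P Q : ℝ[X]}
    (h : Reduces x Ms Ns P Q (C s) 0) (hs : 0 < s) (hP : P.natDegree ≤ Ms.length)
    (hQ : Q.degree < Ms.length) (hPx : P.eval x ≠ 0) (hx : 0 < x) (hl : l < x) (hM : 0 < M)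
    (T : Finset ℝ) (hT : ∀ y ∈ T, x < y) :
    ∃ (Q' : ℝ[X]) (s' : ℝ), 0 < s' ∧ Q'.degree < (Ms.length + 1 : ℕ) ∧
      Reduces l (M :: Ms) (Ns + T.val) ((C x - X) * P) Q' (C s') 0 := by
  have hpair := PairDeformation.of_eval_ne_zero hP hQ hPx
  obtain ⟨p₀, q₀, hpair₀, hred⟩ := h.exists_perturbation hx le_rfl hpair
  have hU : ∀ᶠ y in 𝓝 x, 0 < y ∧ l < y ∧ ∀ z ∈ T, y < z :=
    (eventually_gt_nhds hx).and <| (eventually_gt_nhds hl).and <|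
      T.eventually_all.mpr fun z hz => eventually_lt_nhds (hT z hz)
  obtain ⟨e, hrede, α, β, hα, hβ, hMβ, y, ⟨hy, hly, hyT⟩, hpe, hqe⟩ :=
    (hred.and (hpair₀.eventually_eq_linear hs M hU)).exists
  obtain ⟨s', hs', hlinear⟩ := exists_reduces_linear hM hy hα hβ hMβ T hyT
  rw [← hpe, ← hqe] at hlinear
  obtain ⟨_, _, _, hq, _⟩ := hpair
  exact ⟨_, s', hs', (degree_le_of_natDegree_le (hq.tendstoCoeff.natDegree_le e)).trans_lt
    (WithBot.coe_lt_coe.mpr (Nat.lt_succ_self _)), (hrede.mono hl.le).trans (hlinear.mono hly.le)⟩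

theorem exists_reduces_prod {d : ℕ} {lam Mass : Fin d → ℝ} (hpos : ∀ i, 0 < lam i)
    (hlam : StrictMono lam) (hMass : ∀ i, 0 < Mass i) {T : Fin d → Finset ℝ}
    (hT : ∀ i, ∀ y ∈ T i, lam i < y) {l : ℝ} (hl : ∀ i, l < lam i) :
    ∃ (Q : ℝ[X]) (s : ℝ), 0 < s ∧ Q.degree < d ∧
      Reduces l (List.ofFn Mass) (∑ i, (T i).val) (∏ i, (C (lam i) - X)) Q (C s) 0 := by
  induction d generalizing l with
  | zero => exact ⟨0, 1, one_pos, by simp, by simpa using .refl 1 0⟩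
  | succ d ih =>
    have hlt (i : Fin d) : lam 0 < lam i.succ := hlam i.succ_pos
    obtain ⟨Q, s, hs, hQ, hred⟩ := ih (fun i => hpos i.succ) (hlam.comp Fin.strictMono_succ)
      (fun i => hMass i.succ) (fun i => hT i.succ) hlt
    have hdegree : (∏ i : Fin d, (C (lam i.succ) - X)).natDegree ≤ d := by
      refine (natDegree_prod_le _ _).trans ((Finset.sum_le_card_nsmul _ _ 1 fun i _ => ?_).trans ?_)
      · compute_degree
      · simp
    have heval : (∏ i : Fin d, (C (lam i.succ) - X)).eval (lam 0) ≠ 0 := by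
      rw [eval_prod]
      exact Finset.prod_ne_zero_iff.mpr fun i _ => by simpa [sub_eq_zero] using (hlt i).ne'
    rw [Fin.prod_univ_succ, Fin.sum_univ_succ, List.ofFn_succ, add_comm (T 0).val]
    simpa only [List.length_ofFn] using hred.exists_C_sub_X_mul hs (by rwa [List.length_ofFn])
      (by rwa [List.length_ofFn]) heval (hpos 0) (hl 0) (hMass 0) (T 0) (hT 0)

end Perturbation

theorem sum_sum_filter_val_lt {ι A : Type*} [Fintype ι] [AddCommMonoid A] {m : ℕ} {t : ι → ℕ}
    (ht : ∀ j, t j ≤ m) (g : ι → A) :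
    ∑ i : Fin m, ∑ j with (i : ℕ) < t j, g j = ∑ j, t j • g j := by
  simp only [Finset.sum_filter]
  rw [Finset.sum_comm]
  refine Finset.sum_congr rfl fun j _ => ?_
  rw [← Finset.sum_filter, Finset.sum_const, Fin.card_filter_val_lt, min_eq_right (ht j)]

theorem exists_forall_lt_sum_val_eq {α : Type*} [Preorder α] {m : ℕ} {lam : Fin m → α}
    (hlam : StrictMono lam) {t : Fin m → ℕ} (ht : ∀ i, t i ≤ i) :
    ∃ T : Fin m → Finset α, (∀ i, ∀ y ∈ T i, lam i < y) ∧
      ∑ i, (T i).val = ∑ i, t i • {lam i} := by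
  have hinj : Function.Injective lam := hlam.injective
  refine ⟨fun i => (Finset.univ.filter fun j => (i : ℕ) < t j).map ⟨lam, hinj⟩, fun i => ?_, ?_⟩
  · simp only [Finset.forall_mem_map, Finset.mem_filter, Finset.mem_univ, true_and]
    exact fun j hij => hlam (hij.trans_le (ht j))
  · rw [← sum_sum_filter_val_lt fun j => (ht j).trans j.isLt.le]
    exact Finset.sum_congr rfl fun i _ =>
      (Finset.sum_multiset_singleton _).symm.trans (Finset.sum_map _ _ _)

theorem exists_realizable_prod_pow {m : ℕ} {lam Mass : Fin m → ℝ} (hpos : ∀ i, 0 < lam i)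
    (hlam : StrictMono lam) (hMass : ∀ i, 0 < Mass i) {t : Fin m → ℕ} (ht : ∀ i, 0 < t i)
    (hti : ∀ i, t i ≤ (i : ℕ) + 1) :
    ∃ Q, Realizable (∑ i, t i) (List.ofFn Mass) (∏ i, (C (lam i) - X) ^ t i) Q := by
  obtain ⟨T, hT, hsum⟩ := exists_forall_lt_sum_val_eq hlam (t := fun i => t i - 1)
    fun i => Nat.sub_le_of_le_add (hti i)
  obtain ⟨Q, s, hs, -, hred⟩ := exists_reduces_prod hpos hlam hMass hT hpos
  have hreal := hred.realizable le_rfl (.zero hs.ne')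
  have hcard : m + Multiset.card (∑ i, (T i).val) = ∑ i, t i := by
    have hsplit : ∑ i, t i = ∑ i, (1 + (t i - 1)) :=
      Finset.sum_congr rfl fun i _ => (Nat.add_sub_of_le (ht i)).symm
    rw [hsum, Multiset.card_sum, hsplit, Finset.sum_add_distrib]
    simp
  have hprod : (∏ i, (C (lam i) - X)) * ((∑ i, (T i).val).map fun v => C v - X).prod =
      ∏ i, (C (lam i) - X) ^ t i := by
    rw [hsum, ← Multiset.coe_mapAddMonoidHom, map_sum, Multiset.prod_sum, ← Finset.prod_mul_distrib]
    refine Finset.prod_congr rfl fun i _ => ?_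
    simp [Multiset.map_nsmul, Multiset.prod_nsmul, mul_pow_sub_one (ht i).ne']
  rw [hprod, List.nil_append, List.length_ofFn, zero_add, hcard] at hreal
  exact ⟨_, hreal⟩

theorem exists_eq_ofFn_of_map_eq_ofFn {α β : Type*} {n : ℕ} {f : α → β} {g : Fin n → β} {L : List α}
    (h : L.map f = List.ofFn g) : ∃ a : Fin n → α, L = List.ofFn a := by
  obtain rfl : L.length = n := by simpa using congrArg List.length h
  exact ⟨L.get, (List.ofFn_get L).symm⟩

/-- Proposition `gd`: when `t_i ≤ i`, the assignment can be achieved with `m` prescribed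
masses `M_1, …, M_m` placed at `m` distinct positions. -/
theorem stmt_9 (n mm : ℕ) (hn : 1 ≤ n) (hmm : 1 ≤ mm)
    (Mass : Fin mm → ℝ) (hMass : ∀ l, 0 < Mass l)
    (t : Fin mm → ℕ) (ht : ∀ i, 0 < t i) (hsum : ∑ i, t i = n)
    (hti : ∀ i : Fin mm, t i ≤ (i : ℕ) + 1)
    (lam : Fin mm → ℝ) (hpos : ∀ i, 0 < lam i) (hmono : StrictMono lam) :
    ∃ m k b : ℕ → ℝ,
      (∀ j, 1 ≤ j → j ≤ n → 0 < m j) ∧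
      (∀ j, 1 ≤ j → j ≤ n → 0 < k j) ∧
      (∀ j, 1 ≤ j → j ≤ n → 0 ≤ b j) ∧
      ∃ idx : Fin mm → ℕ, Function.Injective idx ∧
        (∀ l, 1 ≤ idx l ∧ idx l ≤ n) ∧
        (∀ l, m (idx l) = Mass l) ∧
        (∏ i, (Polynomial.X - Polynomial.C (lam i)) ^ t i) ∣ fpoly m k b n := by
  subst hsum
  obtain ⟨Q, m, k, b, hmkb, ⟨idx, hnodup, hmem, hidx⟩, s, hs, hP, -⟩ :=
    exists_realizable_prod_pow hpos hmono hMass ht hti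
  obtain ⟨idx, rfl⟩ : ∃ f : Fin mm → ℕ, idx = List.ofFn f :=
    exists_eq_ofFn_of_map_eq_ofFn hidx
  rw [List.map_ofFn] at hidx
  have hdvd : ∏ i, (X - C (lam i)) ^ t i ∣ ∏ i, (C (lam i) - X) ^ t i :=
    Finset.prod_dvd_prod_of_dvd _ _ fun i _ => pow_dvd_pow_of_dvd ⟨-1, by ring⟩ _
  refine ⟨m, k, b, fun j h1 hj => (hmkb j (Finset.mem_Icc.mpr ⟨h1, hj⟩)).1,
    fun j h1 hj => (hmkb j (Finset.mem_Icc.mpr ⟨h1, hj⟩)).2.1,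
    fun j h1 hj => (hmkb j (Finset.mem_Icc.mpr ⟨h1, hj⟩)).2.2,
    idx, List.nodup_ofFn.mp hnodup, fun l => ?_, congrFun (List.ofFn_injective hidx), ?_⟩
  · exact Finset.mem_Icc.mp (hmem _ (List.mem_ofFn.mpr ⟨l, rfl⟩))
  · rwa [← hP, (isUnit_C.mpr hs.isUnit).dvd_mul_left, ← fpoly_eq_systemPair_fst] at hdvd
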